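/- Standard Newtonian simultaneity, the relation (x̄, t) ∼ (ȳ, s) ⟺ t = s on ℝ³ × ℝ, is the only nontrivial 𝒢-invariant equivalence relation all of whose equivalence classes are connected subsets of ℝ³ × ℝ; it is also the only nontrivial C𝒢-invariant equivalence relation on ℝ³ × ℝ. -/

import Mathlib

/-- A 3×3 real matrix is in SO(3) iff it is orthogonal with determinant 1. -/
def IsSO3 (S : Matrix (Fin 3) (Fin 3) ℝ) : Prop :=
  S.transpose * S = 1 ∧ S.det = 1

/-- Invariance under the Galilei group `𝒢`: the group of maps
`(x̄, t) ↦ (S x̄ + t w̄ + b̄, t + b⁴)` with `S ∈ SO(3)`, `w̄ ∈ ℝ³`. -/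
def IsGalileiInvariant (r : ((Fin 3 → ℝ) × ℝ) → ((Fin 3 → ℝ) × ℝ) → Prop) : Prop :=
  ∀ S : Matrix (Fin 3) (Fin 3) ℝ, IsSO3 S → ∀ w : Fin 3 → ℝ,
    ∀ b : (Fin 3 → ℝ) × ℝ, ∀ p q : (Fin 3 → ℝ) × ℝ, r p q →
      r (S.mulVec p.1 + p.2 • w + b.1, p.2 + b.2)
        (S.mulVec q.1 + q.2 • w + b.1, q.2 + b.2)

/-- Invariance under the conformal Galilei group `C𝒢`: the group of maps
`(x̄, t) ↦ (λ S x̄ + t w̄ + b̄, λ t + b⁴)` with `λ > 0`, `S ∈ SO(3)`, `w̄ ∈ ℝ³`. -/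
def IsConformalGalileiInvariant
    (r : ((Fin 3 → ℝ) × ℝ) → ((Fin 3 → ℝ) × ℝ) → Prop) : Prop :=
  ∀ l : ℝ, 0 < l → ∀ S : Matrix (Fin 3) (Fin 3) ℝ, IsSO3 S → ∀ w : Fin 3 → ℝ,
    ∀ b : (Fin 3 → ℝ) × ℝ, ∀ p q : (Fin 3 → ℝ) × ℝ, r p q →
      r (l • S.mulVec p.1 + p.2 • w + b.1, l * p.2 + b.2)
        (l • S.mulVec q.1 + q.2 • w + b.1, l * q.2 + b.2)

/-- Standard Newtonian simultaneity `(x̄, t) ∼ (ȳ, s) ↔ t = s`. -/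
def NewtonSim (p q : (Fin 3 → ℝ) × ℝ) : Prop := p.2 = q.2

/-- A relation on `ℝ³ × ℝ` is nontrivial if it is neither the total relation nor the
identity relation. -/
def IsNontrivialRel (r : ((Fin 3 → ℝ) × ℝ) → ((Fin 3 → ℝ) × ℝ) → Prop) : Prop :=
  (¬ ∀ p q : (Fin 3 → ℝ) × ℝ, r p q) ∧ (¬ ∀ p q : (Fin 3 → ℝ) × ℝ, r p q → p = q)

/-!
Invariance under translations makes an equivalence relation the coset relation of an additive
subgroup `H` of `ℝⁿ × ℝ`. If `H` contains a vector `(x, t)` with `t ≠ 0`, subtracting it from its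
boosts shows that `H` contains `ℝⁿ × 0`. Otherwise `H`, if not trivial, contains some `(x, 0)` with
`x ≠ 0`; as rotations act transitively on spheres, the vectors of `ℝⁿ` in `H` form a union of
spheres, and differences of points of one sphere have all small norms, so again `ℝⁿ × 0 ≤ H`.
Hence the relation reads `s - t ∈ T` for a subgroup `T` of `ℝ`, and `T` is `0` or `ℝ` as soon as
it is connected or stable under positive scalings.
-/

open Matrix Set

open scoped RealInnerProductSpace

section Rotations

theorem exists_ne_zero_inner_eq_zero {E : Type*} [NormedAddCommGroup E] [InnerProductSpace ℝ E]
    (hE : 1 < Module.rank ℝ E) (v : E) : ∃ w ≠ 0, ⟪v, w⟫ = 0 := by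
  have hv : (ℝ ∙ v)ᗮ ≠ ⊥ := by
    rw [Ne, Submodule.orthogonal_eq_bot_iff]
    intro h
    have := rank_span_le (R := ℝ) ({v} : Set E)
    rw [h, rank_top, Cardinal.mk_singleton] at this
    exact this.not_gt hE
  obtain ⟨w, hw, hw0⟩ := Submodule.exists_mem_ne_zero_of_ne_bot hv
  exact ⟨w, hw0, Submodule.mem_orthogonal_singleton_iff_inner_right.mp hw⟩

theorem det_reflection_orthogonal_singleton {E : Type*} [NormedAddCommGroup E]
    [InnerProductSpace ℝ E] [FiniteDimensional ℝ E] {a : E} (ha : a ≠ 0) :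
    LinearMap.det (ℝ ∙ a)ᗮ.reflection.toLinearMap = -1 := by
  rw [Submodule.det_reflection, Submodule.orthogonal_orthogonal, finrank_span_singleton ha, pow_one]

theorem exists_linearIsometryEquiv_det_eq_one {E : Type*} [NormedAddCommGroup E]
    [InnerProductSpace ℝ E] [FiniteDimensional ℝ E] (hE : 1 < Module.rank ℝ E) {u v : E}
    (h : ‖u‖ = ‖v‖) : ∃ f : E ≃ₗᵢ[ℝ] E, LinearMap.det f.toLinearMap = 1 ∧ f u = v := by
  obtain rfl | huv := eq_or_ne u v
  · exact ⟨.refl ℝ E, LinearMap.det_id, rfl⟩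
  obtain ⟨w, hw, hvw⟩ := exists_ne_zero_inner_eq_zero hE v
  refine ⟨(ℝ ∙ (u - v))ᗮ.reflection.trans (ℝ ∙ w)ᗮ.reflection, ?_, ?_⟩
  · calc LinearMap.det ((ℝ ∙ w)ᗮ.reflection.toLinearMap ∘ₗ
          (ℝ ∙ (u - v))ᗮ.reflection.toLinearMap)
      _ = -1 * -1 := by
        rw [LinearMap.det_comp, det_reflection_orthogonal_singleton hw,
          det_reflection_orthogonal_singleton (sub_ne_zero.mpr huv)]
      _ = 1 := by norm_num
  · rw [LinearIsometryEquiv.trans_apply, Submodule.reflection_sub h]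
    refine Submodule.reflection_mem_subspace_eq_self ?_
    exact Submodule.mem_orthogonal_singleton_iff_inner_left.mpr hvw

theorem one_lt_rank_euclideanSpace {n : Type*} [Finite n] [Nontrivial n] :
    1 < Module.rank ℝ (EuclideanSpace ℝ n) := by
  cases nonempty_fintype n
  rw [← Module.finrank_eq_rank, finrank_euclideanSpace]
  exact_mod_cast Fintype.one_lt_card

theorem exists_mem_specialOrthogonalGroup_mulVec_eq {n : Type*} [Fintype n] [DecidableEq n]
    [Nontrivial n] {u v : EuclideanSpace ℝ n} (h : ‖u‖ = ‖v‖) :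
    ∃ S ∈ specialOrthogonalGroup n ℝ, S *ᵥ u.ofLp = v.ofLp := by
  obtain ⟨f, hf, rfl⟩ := exists_linearIsometryEquiv_det_eq_one one_lt_rank_euclideanSpace h
  let e := EuclideanSpace.basisFun n ℝ
  refine ⟨f.toLinearMap.toMatrix e.toBasis e.toBasis, ?_, ?_⟩
  · refine mem_specialOrthogonalGroup_iff.mpr ⟨f.toMatrix_mem_unitaryGroup e e, ?_⟩
    rw [LinearMap.det_toMatrix, hf]
  · exact LinearMap.toMatrix_mulVec_repr e.toBasis e.toBasis f.toLinearMap u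

end Rotations

section Subgroups

theorem eq_top_of_norm_eq_mem {E : Type*} [NormedAddCommGroup E] [NormedSpace ℝ E]
    (hE : 1 < Module.rank ℝ E) {V : AddSubgroup E} (hV : V ≠ ⊥)
    (hsphere : ∀ v ∈ V, ∀ u, ‖u‖ = ‖v‖ → u ∈ V) : V = ⊤ := by
  obtain ⟨v, hv, hv0⟩ := V.bot_or_exists_ne_zero.resolve_left hV
  have hball : Metric.closedBall 0 ‖v‖ ⊆ (V : Set E) := by
    intro u hu
    have hpre : IsPreconnected ((fun x => ‖x - v‖) '' Metric.sphere 0 ‖v‖) :=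
      (isPreconnected_sphere hE 0 ‖v‖).image _ (by fun_prop)
    have hzero : 0 ∈ (fun x => ‖x - v‖) '' Metric.sphere 0 ‖v‖ := ⟨v, by simp, by simp⟩
    have hantipode : ‖-v - v‖ = ‖v‖ + ‖v‖ := by
      rw [← neg_add', norm_neg, ← two_smul ℝ, norm_smul, Real.norm_two, two_mul]
    have hdiam : ‖v‖ + ‖v‖ ∈ (fun x => ‖x - v‖) '' Metric.sphere 0 ‖v‖ :=
      ⟨-v, by simp, hantipode⟩
    have hu : ‖u‖ ≤ ‖v‖ := mem_closedBall_zero_iff.mp hu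
    obtain ⟨x, hx, hxu⟩ := hpre.Icc_subset hzero hdiam
      ⟨norm_nonneg u, hu.trans (le_add_of_nonneg_left (norm_nonneg v))⟩
    have hxV : x ∈ V := hsphere v hv x (mem_sphere_zero_iff_norm.mp hx)
    exact hsphere (x - v) (V.sub_mem hxV hv) u hxu.symm
  have hopen : IsOpen (V : Set E) := V.isOpen_of_mem_nhds <|
    Filter.mem_of_superset (Metric.closedBall_mem_nhds 0 (norm_pos_iff.mpr hv0)) hball
  have hclopen : IsClopen (V : Set E) := ⟨V.isClosed_of_isOpen hopen, hopen⟩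
  exact SetLike.coe_injective (hclopen.eq_univ ⟨0, V.zero_mem⟩)

theorem eq_top_of_mulVec_mem {n : Type*} [Fintype n] [DecidableEq n] [Nontrivial n]
    {V : AddSubgroup (n → ℝ)} (hV : V ≠ ⊥)
    (hrot : ∀ S ∈ specialOrthogonalGroup n ℝ, ∀ v ∈ V, S *ᵥ v ∈ V) : V = ⊤ := by
  let e := WithLp.linearEquiv 2 ℝ (n → ℝ)
  have he : Function.Surjective (e : EuclideanSpace ℝ n →+ n → ℝ) := e.surjective
  have hn : 1 < Module.rank ℝ (EuclideanSpace ℝ n) := one_lt_rank_euclideanSpace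
  refine AddSubgroup.comap_injective he <|
    eq_top_of_norm_eq_mem hn (fun h => hV (AddSubgroup.comap_injective he ?_)) ?_
  · rw [h, AddMonoidHom.comap_bot, eq_comm, AddMonoidHom.ker_eq_bot_iff]
    exact e.injective
  · intro v hv u huv
    obtain ⟨S, hS, hSv⟩ := exists_mem_specialOrthogonalGroup_mulVec_eq huv.symm
    have huV : u.ofLp ∈ V := hSv ▸ hrot S hS v.ofLp hv
    exact huV

theorem eq_bot_or_eq_top_of_ordConnected {G : Type*} [AddCommGroup G] [LinearOrder G]
    [IsOrderedAddMonoid G] [Archimedean G] {T : AddSubgroup G} (hT : OrdConnected (T : Set G)) :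
    T = ⊥ ∨ T = ⊤ := by
  refine or_iff_not_imp_left.mpr fun hbot => (AddSubgroup.eq_top_iff' T).mpr fun s => ?_
  obtain ⟨t, ht, ht0⟩ := T.bot_or_exists_ne_zero.resolve_left hbot
  obtain ⟨k, hk⟩ := Archimedean.arch |s| (abs_pos.mpr ht0)
  have hmem : k • |t| ∈ T := T.nsmul_mem (abs_mem_iff.mpr ht) k
  exact hT.out (T.neg_mem hmem) hmem (abs_le.mp hk)

theorem eq_bot_or_eq_top_of_pos_mul_mem {K : Type*} [Field K] [LinearOrder K]
    [IsStrictOrderedRing K] {T : AddSubgroup K} (hT : ∀ l > 0, ∀ t ∈ T, l * t ∈ T) :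
    T = ⊥ ∨ T = ⊤ := by
  refine or_iff_not_imp_left.mpr fun hbot => (AddSubgroup.eq_top_iff' T).mpr fun s => ?_
  obtain ⟨t, ht, ht0⟩ := T.bot_or_exists_ne_zero.resolve_left hbot
  rcases lt_trichotomy (s / t) 0 with h | h | h
  · simpa [ht0] using hT (-(s / t)) (neg_pos.mpr h) (-t) (T.neg_mem ht)
  · simp [(div_eq_zero_iff.mp h).resolve_right ht0]
  · simpa [ht0] using hT (s / t) h t ht

end Subgroups

section CosetRelations

theorem exists_eq_leftRel_of_rel_add {A : Type*} [AddCommGroup A] {r : Setoid A}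
    (hr : ∀ b p q, r p q → r (p + b) (q + b)) :
    ∃ H : AddSubgroup A, r = QuotientAddGroup.leftRel H := by
  let c : AddCon A :=
    { r with
      add' := fun {a b c d} hab hcd => r.trans (hr c a b hab) <| by
        simpa only [add_comm b] using hr b c d hcd }
  exact ⟨c.addSubgroup, congrArg AddCon.toSetoid (QuotientAddGroup.con_addSubgroup c).symm⟩

theorem leftRel_eq_comap_map {A B : Type*} [AddGroup A] [AddGroup B] {H : AddSubgroup A}
    (f : A →+ B) (h : f.ker ≤ H) :
    QuotientAddGroup.leftRel H = (QuotientAddGroup.leftRel (H.map f)).comap f := by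
  ext p q
  simp only [Setoid.comap_rel, QuotientAddGroup.leftRel_apply]
  rw [← map_neg, ← map_add, ← AddSubgroup.mem_comap, AddSubgroup.comap_map_eq_self h]

theorem leftRel_bot {A : Type*} [AddGroup A] :
    QuotientAddGroup.leftRel (⊥ : AddSubgroup A) = ⊥ := by
  ext p q
  rw [QuotientAddGroup.leftRel_apply, AddSubgroup.mem_bot, neg_add_eq_zero, Setoid.bot_def]

theorem leftRel_top {A : Type*} [AddGroup A] :
    QuotientAddGroup.leftRel (⊤ : AddSubgroup A) = ⊤ :=
  Setoid.eq_top_iff.mpr fun _ _ => QuotientAddGroup.leftRel_apply.mpr (AddSubgroup.mem_top _)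

theorem comap_leftRel_eq_ker {X A : Type*} [AddGroup A] {T : AddSubgroup A} {f : X → A}
    (hT : T = ⊥ ∨ T = ⊤) (htop : (QuotientAddGroup.leftRel T).comap f ≠ ⊤) :
    (QuotientAddGroup.leftRel T).comap f = Setoid.ker f := by
  rcases hT with rfl | rfl
  · rw [leftRel_bot]
    rfl
  · rw [leftRel_top] at htop
    exact absurd rfl htop

end CosetRelations

section KerSnd

theorem ker_snd_ne_top (E : Type*) [Nonempty E] (F : Type*) [Nontrivial F] :
    Setoid.ker (Prod.snd : E × F → F) ≠ ⊤ := by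
  obtain ⟨s, t, hst⟩ := exists_pair_ne F
  obtain ⟨x⟩ := ‹Nonempty E›
  exact fun h => hst (Setoid.eq_top_iff.mp h (x, s) (x, t))

theorem ker_snd_ne_bot (E : Type*) [Nontrivial E] (F : Type*) [Nonempty F] :
    Setoid.ker (Prod.snd : E × F → F) ≠ ⊥ := by
  obtain ⟨x, y, hxy⟩ := exists_pair_ne E
  obtain ⟨t⟩ := ‹Nonempty F›
  rw [Ne, Setoid.ker_eq_bot_iff]
  exact fun h => hxy (congrArg Prod.fst (@h (x, t) (y, t) rfl))

theorem isConnected_setOf_ker_snd {E F : Type*} [TopologicalSpace E] [ConnectedSpace E]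
    [TopologicalSpace F] (p : E × F) : IsConnected {q : E × F | Setoid.ker Prod.snd p q} := by
  have hslice : {q : E × F | Setoid.ker Prod.snd p q} = univ ×ˢ {p.2} := by
    ext q
    simp [Setoid.ker_def, eq_comm]
  rw [hslice]
  exact isConnected_univ.prod isConnected_singleton

end KerSnd

section GalileiInvariant

variable {n : Type*} [Fintype n] [DecidableEq n]

/-- The affine map `(x̄, t) ↦ (l S x̄ + t w̄ + b̄, l t + b⁴)` of `ℝⁿ × ℝ`. -/
def galileiMap (l : ℝ) (S : Matrix n n ℝ) (w : n → ℝ) (b p : (n → ℝ) × ℝ) : (n → ℝ) × ℝ :=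
  (l • S *ᵥ p.1 + p.2 • w + b.1, l * p.2 + b.2)

/-- Invariance of an equivalence relation on `ℝⁿ × ℝ` under the Galilei transformations with
rotation part in `SO(n)` and scale factor in `Λ`: the Galilei group is `Λ = {1}`, the conformal
Galilei group is `Λ = (0, ∞)`. -/
def GalileiInvariant (Λ : Set ℝ) (r : Setoid ((n → ℝ) × ℝ)) : Prop :=
  ∀ l ∈ Λ, ∀ S ∈ specialOrthogonalGroup n ℝ, ∀ w b p q,
    r p q → r (galileiMap l S w b p) (galileiMap l S w b q)

theorem galileiInvariant_ker_snd (Λ : Set ℝ) :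
    GalileiInvariant Λ (Setoid.ker (Prod.snd : (n → ℝ) × ℝ → ℝ)) := by
  intro l _ S _ _ b p q (h : p.2 = q.2)
  exact congrArg (l * · + b.2) h

theorem GalileiInvariant.mono {Λ Λ' : Set ℝ} {r : Setoid ((n → ℝ) × ℝ)} (h : Λ ⊆ Λ')
    (hr : GalileiInvariant Λ' r) : GalileiInvariant Λ r :=
  fun l hl => hr l (h hl)

theorem GalileiInvariant.rel_add {r : Setoid ((n → ℝ) × ℝ)} (hr : GalileiInvariant {1} r)
    (b p q : (n → ℝ) × ℝ) (h : r p q) : r (p + b) (q + b) := by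
  simpa [galileiMap, ← Prod.add_def] using hr 1 rfl 1 (one_mem _) 0 b p q h

theorem GalileiInvariant.galileiMap_mem {Λ : Set ℝ} {H : AddSubgroup ((n → ℝ) × ℝ)}
    (hH : GalileiInvariant Λ (QuotientAddGroup.leftRel H)) {l : ℝ} (hl : l ∈ Λ) {S : Matrix n n ℝ}
    (hS : S ∈ specialOrthogonalGroup n ℝ) (w : n → ℝ) {p : (n → ℝ) × ℝ} (hp : p ∈ H) :
    galileiMap l S w 0 p ∈ H := by
  have h := hH l hl S hS w 0 0 p (by simpa [QuotientAddGroup.leftRel_apply] using hp)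
  simpa [QuotientAddGroup.leftRel_apply, galileiMap] using h

theorem GalileiInvariant.mem_of_time_ne_zero {H : AddSubgroup ((n → ℝ) × ℝ)}
    (hH : GalileiInvariant {1} (QuotientAddGroup.leftRel H)) {p : (n → ℝ) × ℝ} (hp : p ∈ H)
    (ht : p.2 ≠ 0) (y : n → ℝ) : (y, 0) ∈ H := by
  have hboost := hH.galileiMap_mem rfl (one_mem _) (p.2⁻¹ • y) hp
  have hdiff : galileiMap 1 1 (p.2⁻¹ • y) 0 p - p = (y, 0) := by
    ext <;> simp [galileiMap, ht]
  exact hdiff ▸ H.sub_mem hboost hp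

theorem GalileiInvariant.mem_of_space_ne_zero [Nontrivial n] {H : AddSubgroup ((n → ℝ) × ℝ)}
    (hH : GalileiInvariant {1} (QuotientAddGroup.leftRel H)) {x : n → ℝ} (hx : (x, 0) ∈ H)
    (hx0 : x ≠ 0) (y : n → ℝ) : (y, 0) ∈ H := by
  let V : AddSubgroup (n → ℝ) := H.comap (AddMonoidHom.inl (n → ℝ) ℝ)
  have hV : V ≠ ⊥ := fun h => hx0 ((AddSubgroup.eq_bot_iff_forall V).mp h x hx)
  have htop : V = ⊤ := eq_top_of_mulVec_mem hV fun S hS v hv => by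
    simpa [galileiMap, V] using hH.galileiMap_mem rfl hS 0 hv
  exact (AddSubgroup.eq_top_iff' V).mp htop y

theorem GalileiInvariant.ker_snd_le [Nontrivial n] {H : AddSubgroup ((n → ℝ) × ℝ)}
    (hH : GalileiInvariant {1} (QuotientAddGroup.leftRel H)) (hbot : H ≠ ⊥) :
    (AddMonoidHom.snd (n → ℝ) ℝ).ker ≤ H := by
  rintro ⟨y, _⟩ rfl
  obtain ⟨⟨x, t⟩, hp, hp0⟩ := H.bot_or_exists_ne_zero.resolve_left hbot
  obtain rfl | ht := eq_or_ne t 0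
  · exact hH.mem_of_space_ne_zero hp (fun hx => hp0 (by rw [hx, Prod.mk_zero_zero])) y
  · exact hH.mem_of_time_ne_zero hp ht y

theorem GalileiInvariant.exists_eq_comap_snd [Nontrivial n] {r : Setoid ((n → ℝ) × ℝ)}
    (hr : GalileiInvariant {1} r) (hbot : r ≠ ⊥) :
    ∃ T : AddSubgroup ℝ, r = (QuotientAddGroup.leftRel T).comap Prod.snd := by
  obtain ⟨H, rfl⟩ := exists_eq_leftRel_of_rel_add hr.rel_add
  have hH : H ≠ ⊥ := fun h => hbot (h ▸ leftRel_bot)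
  exact ⟨_, leftRel_eq_comap_map (AddMonoidHom.snd (n → ℝ) ℝ) (hr.ker_snd_le hH)⟩

theorem GalileiInvariant.eq_ker_snd_of_isPreconnected [Nontrivial n] {r : Setoid ((n → ℝ) × ℝ)}
    (hr : GalileiInvariant {1} r) (htop : r ≠ ⊤) (hbot : r ≠ ⊥)
    (hconn : IsPreconnected {q | r 0 q}) : r = Setoid.ker Prod.snd := by
  obtain ⟨T, rfl⟩ := hr.exists_eq_comap_snd hbot
  have himage : Prod.snd '' {q : (n → ℝ) × ℝ |
      (QuotientAddGroup.leftRel T).comap Prod.snd 0 q} = T := by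
    ext t
    simp [Setoid.comap_rel, QuotientAddGroup.leftRel_apply]
  have hT : OrdConnected (T : Set ℝ) :=
    himage ▸ (hconn.image _ continuous_snd.continuousOn).ordConnected
  exact comap_leftRel_eq_ker (eq_bot_or_eq_top_of_ordConnected hT) htop

theorem GalileiInvariant.eq_ker_snd_of_conformal [Nontrivial n] {r : Setoid ((n → ℝ) × ℝ)}
    (hr : GalileiInvariant (Ioi 0) r) (htop : r ≠ ⊤) (hbot : r ≠ ⊥) :
    r = Setoid.ker Prod.snd := by
  have hone : ({1} : Set ℝ) ⊆ Ioi 0 := by simp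
  obtain ⟨T, rfl⟩ := (hr.mono hone).exists_eq_comap_snd hbot
  refine comap_leftRel_eq_ker (eq_bot_or_eq_top_of_pos_mul_mem fun l hl t ht => ?_) htop
  have h := hr l hl 1 (one_mem _) 0 0 (0, 0) (0, t)
  simpa [galileiMap, Setoid.comap_rel, QuotientAddGroup.leftRel_apply, ht] using h

end GalileiInvariant

theorem newton_simultaneity_unique_general {n : Type*} [Fintype n] [DecidableEq n] [Nontrivial n] :
    (Setoid.ker (Prod.snd : (n → ℝ) × ℝ → ℝ) ≠ ⊤ ∧
      Setoid.ker (Prod.snd : (n → ℝ) × ℝ → ℝ) ≠ ⊥ ∧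
      (∀ p : (n → ℝ) × ℝ, IsConnected {q | Setoid.ker Prod.snd p q}) ∧
      ∀ Λ, GalileiInvariant Λ (Setoid.ker (Prod.snd : (n → ℝ) × ℝ → ℝ))) ∧
    (∀ r : Setoid ((n → ℝ) × ℝ), GalileiInvariant {1} r → r ≠ ⊤ → r ≠ ⊥ →
      (∀ p, IsConnected {q | r p q}) → r = Setoid.ker Prod.snd) ∧
    (∀ r : Setoid ((n → ℝ) × ℝ), GalileiInvariant (Ioi 0) r → r ≠ ⊤ → r ≠ ⊥ →
      r = Setoid.ker Prod.snd) :=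
  ⟨⟨ker_snd_ne_top _ _, ker_snd_ne_bot _ _, isConnected_setOf_ker_snd, galileiInvariant_ker_snd⟩,
    fun _ hr htop hbot hconn => hr.eq_ker_snd_of_isPreconnected htop hbot (hconn 0).isPreconnected,
    fun _ => GalileiInvariant.eq_ker_snd_of_conformal⟩

theorem isSO3_iff {S : Matrix (Fin 3) (Fin 3) ℝ} :
    IsSO3 S ↔ S ∈ specialOrthogonalGroup (Fin 3) ℝ := by
  rw [mem_specialOrthogonalGroup_iff, mem_orthogonalGroup_iff', IsSO3]

theorem isGalileiInvariant_iff {r : Setoid ((Fin 3 → ℝ) × ℝ)} :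
    IsGalileiInvariant r ↔ GalileiInvariant {1} r := by
  simp [IsGalileiInvariant, GalileiInvariant, galileiMap, isSO3_iff]

theorem isConformalGalileiInvariant_iff {r : Setoid ((Fin 3 → ℝ) × ℝ)} :
    IsConformalGalileiInvariant r ↔ GalileiInvariant (Ioi 0) r := by
  simp [IsConformalGalileiInvariant, GalileiInvariant, galileiMap, isSO3_iff]

theorem isNontrivialRel_iff {r : Setoid ((Fin 3 → ℝ) × ℝ)} :
    IsNontrivialRel r ↔ r ≠ ⊤ ∧ r ≠ ⊥ := by
  rw [IsNontrivialRel, Ne, Ne, Setoid.eq_top_iff, eq_bot_iff]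
  rfl

/-- Standard Newtonian simultaneity is the only nontrivial Galilei-invariant
equivalence relation on `ℝ³ × ℝ` all of whose equivalence classes are connected,
and also the only nontrivial conformal-Galilei-invariant equivalence relation. -/
theorem newton_simultaneity_unique :
    (Equivalence NewtonSim ∧ IsGalileiInvariant NewtonSim ∧
      IsNontrivialRel NewtonSim ∧
      (∀ p : (Fin 3 → ℝ) × ℝ, IsConnected {q | NewtonSim p q}) ∧
      IsConformalGalileiInvariant NewtonSim) ∧
    (∀ r : ((Fin 3 → ℝ) × ℝ) → ((Fin 3 → ℝ) × ℝ) → Prop,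
      Equivalence r → IsGalileiInvariant r → IsNontrivialRel r →
      (∀ p : (Fin 3 → ℝ) × ℝ, IsConnected {q | r p q}) →
      ∀ p q, r p q ↔ NewtonSim p q) ∧
    (∀ r : ((Fin 3 → ℝ) × ℝ) → ((Fin 3 → ℝ) × ℝ) → Prop,
      Equivalence r → IsConformalGalileiInvariant r → IsNontrivialRel r →
      ∀ p q, r p q ↔ NewtonSim p q) := by
  obtain ⟨⟨htop, hbot, hconn, hinv⟩, hGalilei, hConformal⟩ :=
    newton_simultaneity_unique_general (n := Fin 3)
  refine ⟨⟨(Setoid.ker Prod.snd).iseqv, isGalileiInvariant_iff.mpr (hinv _),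
    isNontrivialRel_iff.mpr ⟨htop, hbot⟩, hconn, isConformalGalileiInvariant_iff.mpr (hinv _)⟩,
    fun r hr hinv hnt hconn => ?_, fun r hr hinv hnt => ?_⟩
  · obtain ⟨htop, hbot⟩ := (isNontrivialRel_iff (r := ⟨r, hr⟩)).mp hnt
    exact Setoid.ext_iff.mp (hGalilei _ (isGalileiInvariant_iff.mp hinv) htop hbot hconn)
  · obtain ⟨htop, hbot⟩ := (isNontrivialRel_iff (r := ⟨r, hr⟩)).mp hnt
    exact Setoid.ext_iff.mp (hConformal _ (isConformalGalileiInvariant_iff.mp hinv) htop hbot)
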